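/- (Flux Lemma, Lemma 2.1.) Let d ≥ 1, 0 < m < 1 and 0 < 2R < R₀. There exists a positive constant k₀ depending only on d such that the following holds. Let u solve the minimal Dirichlet problem for the FDE ∂ₜu = Δ(u^m) on B_{R₀}(x₀) with nonnegative initial data u₀ supported in the closure of B_R(x₀) and extinction time T. Then for every 0 ≤ s ≤ T: k₀ (R₀ − 2R)² ∫_{B_{R₀}(x₀)} u(s,x) dx ≤ ∫_s^T ∫_{A₀} u(t,x)^m dx dt, where A₀ = B_{R₀}(x₀) \ B_{2R}(x₀). -/

import Mathlib

open MeasureTheory Metric Set Real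

/-- The spatial Laplacian of `f : ℝ^d → ℝ` at a point, as the sum of second
coordinate derivatives. -/
noncomputable def spaceLap {d : ℕ} (f : EuclideanSpace ℝ (Fin d) → ℝ)
    (x : EuclideanSpace ℝ (Fin d)) : ℝ :=
  ∑ i : Fin d, fderiv ℝ (fun y => fderiv ℝ f y (EuclideanSpace.single i 1)) x
    (EuclideanSpace.single i 1)

/-- `u` is a classical solution of the fast diffusion equation `∂ₜ u = Δ(u^m)`
on the space-time set `Q`: it is positive and smooth on `Q` and satisfies the
equation pointwise on `Q`. -/
def IsFDESol {d : ℕ} (m : ℝ) (Q : Set (ℝ × EuclideanSpace ℝ (Fin d)))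
    (u : ℝ → EuclideanSpace ℝ (Fin d) → ℝ) : Prop :=
  (∀ p ∈ Q, 0 < u p.1 p.2) ∧
  ContDiffOn ℝ (⊤ : ℕ∞) (fun p : ℝ × EuclideanSpace ℝ (Fin d) => u p.1 p.2) Q ∧
  ∀ p ∈ Q, deriv (fun s => u s p.2) p.1 = spaceLap (fun y => u p.1 y ^ m) p.2

/-- `u` solves the homogeneous Dirichlet problem for the FDE `∂ₜ u = Δ(u^m)` on the
ball `B_ρ(x₀)` with initial data `u₀` and extinction time `T`. -/
def IsDirichletSol {d : ℕ} (m : ℝ) (x₀ : EuclideanSpace ℝ (Fin d)) (ρ T : ℝ)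
    (u : ℝ → EuclideanSpace ℝ (Fin d) → ℝ) (u₀ : EuclideanSpace ℝ (Fin d) → ℝ) : Prop :=
  (∀ t ∈ Icc 0 T, ∀ x ∈ closedBall x₀ ρ, 0 ≤ u t x) ∧
  ContinuousOn (fun p : ℝ × EuclideanSpace ℝ (Fin d) => u p.1 p.2)
    (Icc 0 T ×ˢ closedBall x₀ ρ) ∧
  IsFDESol m (Ioo 0 T ×ˢ ball x₀ ρ) u ∧
  (∀ x ∈ ball x₀ ρ, u 0 x = u₀ x) ∧
  (∀ t ∈ Ioc 0 T, ∀ x ∈ sphere x₀ ρ, u t x = 0) ∧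
  (∀ x ∈ closedBall x₀ ρ, u T x = 0) ∧
  ∀ t ∈ Ioo 0 T, ∃ x ∈ ball x₀ ρ, u t x ≠ 0

/-!
Testing the equation against a cutoff `φ` equal to `1` on `B_r(x₀)`, where `r = R + R₀ / 2`, and
integrating by parts twice bounds the loss of `∫ φ u` between the times `s` and `T` by a multiple of
the space-time integral of `u ^ m` over the annulus, off which `Δ φ` vanishes.

The mass of `u(s, ·)` outside `B_r(x₀)` is controlled by Aleksandrov's reflection principle: if
`‖x - x₀‖ ≥ 2R`, the hyperplane that exchanges `x` with the midpoint of `x₀` and `x` has the support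
of the initial datum on the side of `x₀`, so comparing `u` with its reflection gives
`u(s, x) ≤ u(s, (x₀ + x) / 2)`. Halving the distances to `x₀` maps `B_{R₀}(x₀)` into `B_r(x₀)` and
divides volumes by `2 ^ d`, so the outer mass is at most `2 ^ d` times the inner one.

Testing the equation for the difference of two solutions `u`, `v` with the sign of `(u - v)₊` would
need regularity up to the boundary; the comparison principle is obtained instead by applying the
maximum principle to the time integral of `(u ^ m - v ^ m)₊`.
-/

open Filter Topology Laplacian Function
open scoped ContDiff RealInnerProductSpace

section SecondDerivatives

variable {E F : Type*} [NormedAddCommGroup E] [NormedSpace ℝ E]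
  [NormedAddCommGroup F] [NormedSpace ℝ F]

theorem fderiv_fderiv_comp_affine {f : F → ℝ} (A : E →L[ℝ] F) (c : F) {x : E}
    (hf : ContDiffAt ℝ 2 f (A x + c)) (v w : E) :
    fderiv ℝ (fderiv ℝ fun y => f (A y + c)) x v w =
      fderiv ℝ (fderiv ℝ f) (A x + c) (A v) (A w) := by
  have hA (y : E) : HasFDerivAt (fun y => A y + c) A y := A.hasFDerivAt.add_const c
  have hdiff : ∀ᶠ y in 𝓝 x, DifferentiableAt ℝ f (A y + c) :=
    (hA x).continuousAt.eventually <|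
      (hf.eventually (by simp)).mono fun _ h => h.differentiableAt (by simp)
  have hfirst : fderiv ℝ (fun y => f (A y + c)) =ᶠ[𝓝 x]
      fun y => (fderiv ℝ f (A y + c)).comp A := by
    filter_upwards [hdiff] with y hy
    exact (hy.hasFDerivAt.comp y (hA y)).fderiv
  have hsecond : HasFDerivAt (fderiv ℝ f) (fderiv ℝ (fderiv ℝ f) (A x + c)) (A x + c) :=
    ((hf.fderiv_right (m := 1) (by norm_num)).differentiableAt (by simp)).hasFDerivAt
  have hcomp : HasFDerivAt (fun y => (fderiv ℝ f (A y + c)).comp A) _ x :=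
    (hsecond.comp x (hA x)).clm_comp (hasFDerivAt_const A x)
  rw [hfirst.fderiv_eq, hcomp.fderiv]
  simp

theorem fderiv_fderiv_apply {f : E → F} {x : E} (hf : ContDiffAt ℝ 2 f x) (v w : E) :
    fderiv ℝ (fun y => fderiv ℝ f y v) x w = fderiv ℝ (fderiv ℝ f) x w v := by
  have : DifferentiableAt ℝ (fderiv ℝ f) x :=
    (hf.fderiv_right (m := 1) (by norm_num)).differentiableAt (by simp)
  rw [fderiv_clm_apply this (by fun_prop)]
  simp

theorem deriv_deriv_nonpos_of_isLocalMax {g g' : ℝ → ℝ} {a x : ℝ} (hmax : IsLocalMax g x)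
    (hg : ∀ᶠ s in 𝓝 x, HasDerivAt g (g' s) s) (hg' : HasDerivAt g' a x) : a ≤ 0 := by
  by_contra! ha
  have hderiv : deriv g =ᶠ[𝓝 x] g' := hg.mono fun s hs => hs.deriv
  have hmin : IsLocalMin g x := isLocalMin_of_deriv_deriv_pos
    (by rwa [hderiv.deriv_eq, hg'.deriv]) hmax.deriv_eq_zero hg.self_of_nhds.continuousAt
  have hconst : g =ᶠ[𝓝 x] fun _ => g x := by
    filter_upwards [hmax, hmin] with s hle hge using le_antisymm hle hge
  have : g' =ᶠ[𝓝 x] fun _ => 0 := by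
    filter_upwards [hderiv, hconst.eventuallyEq_nhds] with s hs hs'
    rw [← hs, hs'.deriv_eq, deriv_const]
  exact ha.ne' (by rw [← hg'.deriv, this.deriv_eq, deriv_const])

theorem lineDeriv_lineDeriv_nonpos_of_isLocalMax {f f' : E → ℝ} {a : ℝ} {x v : E}
    (hmax : IsLocalMax f x) (hf : ∀ᶠ y in 𝓝 x, HasLineDerivAt ℝ f (f' y) y v)
    (hf' : HasLineDerivAt ℝ f' a x v) : a ≤ 0 := by
  have hline : Tendsto (fun s : ℝ => x + s • v) (𝓝 0) (𝓝 x) := by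
    have : Continuous fun s : ℝ => x + s • v := by fun_prop
    simpa using this.tendsto 0
  refine deriv_deriv_nonpos_of_isLocalMax (g := fun s : ℝ => f (x + s • v)) (x := 0) ?_ ?_ hf'
  · simpa [IsLocalMax, IsMaxFilter] using hline.eventually hmax
  · filter_upwards [hline.eventually hf] with s hs
    simpa [add_assoc, ← add_smul] using
      HasDerivAt.comp_sub_const (f := fun r : ℝ => f (x + s • v + r • v)) s s
        (by simpa [HasLineDerivAt] using hs)

theorem continuousOn_fderiv_fderiv_apply {f : E → ℝ} {Q : Set E} (hQ : IsOpen Q)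
    (hf : ContDiffOn ℝ 2 f Q) (v w : E) :
    ContinuousOn (fun p => fderiv ℝ (fderiv ℝ f) p v w) Q :=
  (((hf.fderiv_of_isOpen hQ (m := 1) (by norm_num)).continuousOn_fderiv_of_isOpen hQ
    le_rfl).clm_apply continuousOn_const).clm_apply continuousOn_const

end SecondDerivatives

section ParametricIntegrals

variable {X : Type*} [TopologicalSpace X] [T2Space X] [MeasurableSpace X] [OpensMeasurableSpace X]
  {μ : Measure X} [IsFiniteMeasureOnCompacts μ]
  {F : Type*} [NormedAddCommGroup F] [NormedSpace ℝ F]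

theorem continuousOn_setIntegral {Y : Type*} [TopologicalSpace Y] [FirstCountableTopology Y]
    {L : Set Y} {K S : Set X} (hL : IsCompact L) (hK : IsCompact K) (hS : MeasurableSet S)
    (hSK : S ⊆ K) {f : Y → X → F} (hf : ContinuousOn (uncurry f) (L ×ˢ K)) :
    ContinuousOn (fun y => ∫ x in S, f y x ∂μ) L := by
  obtain ⟨C, hC⟩ := (hL.prod hK).exists_bound_of_continuousOn hf
  have hslice (y : Y) (hy : y ∈ L) : ContinuousOn (f y) K :=
    hf.comp (f := fun x => (y, x)) (by fun_prop) fun x hx => ⟨hy, hx⟩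
  refine continuousOn_of_dominated (bound := fun _ => C) (fun y hy => ?_) (fun y hy => ?_) ?_ ?_
  · exact (((hslice y hy).aestronglyMeasurable_of_isCompact hK hK.measurableSet).mono_set hSK)
  · exact (ae_restrict_iff' hS).2 (.of_forall fun x hx => hC (y, x) ⟨hy, hSK hx⟩)
  · exact integrableOn_const ((measure_mono hSK).trans_lt hK.measure_lt_top).ne
  · exact (ae_restrict_iff' hS).2 (.of_forall fun x hx =>
      hf.comp (f := fun y => (y, x)) (by fun_prop) fun y hy => ⟨hy, hSK hx⟩)

theorem hasDerivAt_setIntegral {K S : Set X} (hK : IsCompact K) (hS : MeasurableSet S)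
    (hSK : S ⊆ K) {V : Set ℝ} {s₀ : ℝ} (hV : V ∈ 𝓝 s₀) {f f' : ℝ → X → F}
    (hf : ∀ s ∈ V, ContinuousOn (f s) K) (hf' : ContinuousOn (uncurry f') (V ×ˢ K))
    (hderiv : ∀ s ∈ V, ∀ x ∈ K, HasDerivAt (fun s => f s x) (f' s x) s) :
    HasDerivAt (fun s => ∫ x in S, f s x ∂μ) (∫ x in S, f' s₀ x ∂μ) s₀ := by
  obtain ⟨L, hL, hLV, hLcompact⟩ := local_compact_nhds hV
  obtain ⟨C, hC⟩ := (hLcompact.prod hK).exists_bound_of_continuousOn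
    (hf'.mono (prod_mono_left hLV))
  have hmeas {g : X → F} (hg : ContinuousOn g K) : AEStronglyMeasurable g (μ.restrict S) :=
    (hg.aestronglyMeasurable_of_isCompact hK hK.measurableSet).mono_set hSK
  have hs₀ : s₀ ∈ V := mem_of_mem_nhds hV
  refine (hasDerivAt_integral_of_dominated_loc_of_deriv_le (bound := fun _ => C) hL
    ?_ ?_ ?_ ?_ ?_ ?_).2
  · filter_upwards [hV] with s hs using hmeas (hf s hs)
  · exact ((hf s₀ hs₀).integrableOn_compact hK).mono_set hSK
  · exact hmeas (hf'.comp (f := fun x => (s₀, x)) (by fun_prop) fun x hx => ⟨hs₀, hx⟩)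
  · exact (ae_restrict_iff' hS).2 (.of_forall fun x hx s hs => hC (s, x) ⟨hs, hSK hx⟩)
  · exact integrableOn_const ((measure_mono hSK).trans_lt hK.measure_lt_top).ne
  · exact (ae_restrict_iff' hS).2 (.of_forall fun x hx s hs => hderiv s (hLV hs) x (hSK hx))

end ParametricIntegrals

section PositivePart

theorem deriv_max_zero {w : ℝ → ℝ} {t : ℝ} (hw : ContinuousAt w t) :
    deriv (fun s => max (w s) 0) t = {s | 0 < w s}.indicator (deriv w) t := by
  rcases lt_trichotomy (w t) 0 with hneg | hzero | hpos
  · have : (fun s => max (w s) 0) =ᶠ[𝓝 t] fun _ => 0 := by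
      filter_upwards [hw.eventually (gt_mem_nhds hneg)] with s hs using max_eq_right hs.le
    rw [this.deriv_eq, deriv_const, indicator_of_notMem (by simpa using hneg.le)]
  · have : IsLocalMin (fun s => max (w s) 0) t := .of_forall fun s => by simp [hzero]
    rw [this.deriv_eq_zero, indicator_of_notMem (by simp [hzero])]
  · have : (fun s => max (w s) 0) =ᶠ[𝓝 t] w := by
      filter_upwards [hw.eventually (lt_mem_nhds hpos)] with s hs using max_eq_left hs.le
    rw [this.deriv_eq, indicator_of_mem (by simpa using hpos)]

theorem measurableSet_inter_setOf_pos {X : Type*} [TopologicalSpace X] [MeasurableSpace X]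
    [OpensMeasurableSpace X] {s : Set X} (hs : MeasurableSet s) {w : X → ℝ}
    (hw : ContinuousOn w s) : MeasurableSet (s ∩ {x | 0 < w x}) := by
  obtain ⟨o, ho, heq⟩ := continuousOn_iff'.1 hw (Ioi 0) isOpen_Ioi
  rw [inter_comm]
  exact heq ▸ ho.measurableSet.inter hs

theorem setIntegral_deriv_pos_eq_sub {w w' : ℝ → ℝ} {a b : ℝ} (hab : a ≤ b)
    (hw : ∀ t ∈ Icc a b, HasDerivAt w (w' t) t) (hw' : ContinuousOn w' (Icc a b)) :
    ∫ t in Icc a b ∩ {t | 0 < w t}, w' t = max (w b) 0 - max (w a) 0 := by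
  obtain ⟨C, hC⟩ := isCompact_Icc.exists_bound_of_continuousOn hw'
  have hlip : LipschitzOnWith C.toNNReal w (Icc a b) :=
    (convex_Icc a b).lipschitzOnWith_of_nnnorm_hasDerivWithin_le
      (fun t ht => (hw t ht).hasDerivWithinAt)
      fun t ht => NNReal.coe_le_coe.1 <| (hC t ht).trans (Real.le_coe_toNNReal C)
  have hlip_max : LipschitzOnWith (1 * C.toNNReal) (fun t => max (w t) 0) (uIcc a b) := by
    rw [uIcc_of_le hab]
    exact (LipschitzWith.id.max_const 0).comp_lipschitzOnWith hlip
  have hmeas : MeasurableSet (Icc a b ∩ {t | 0 < w t}) :=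
    measurableSet_inter_setOf_pos measurableSet_Icc hlip.continuousOn
  calc ∫ t in Icc a b ∩ {t | 0 < w t}, w' t
      = ∫ t in Icc a b, (Icc a b ∩ {t | 0 < w t}).indicator w' t := by
        rw [setIntegral_indicator hmeas, ← inter_assoc, inter_self]
    _ = ∫ t in Icc a b, deriv (fun s => max (w s) 0) t := by
        refine setIntegral_congr_fun measurableSet_Icc fun t ht => ?_
        simp only [deriv_max_zero (hw t ht).continuousAt, indicator_apply, mem_inter_iff, ht,
          true_and, (hw t ht).deriv]
    _ = max (w b) 0 - max (w a) 0 := by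
        rw [integral_Icc_eq_integral_Ioc, ← intervalIntegral.integral_of_le hab,
          hlip_max.absolutelyContinuousOnInterval.integral_deriv_eq_sub]

end PositivePart

section Laplacian

variable {E : Type*} [NormedAddCommGroup E] [InnerProductSpace ℝ E] [FiniteDimensional ℝ E]

theorem laplacian_eq_sum_fderiv_fderiv {ι : Type*} [Fintype ι] (b : OrthonormalBasis ι ℝ E)
    (f : E → ℝ) (x : E) : Δ f x = ∑ i, fderiv ℝ (fderiv ℝ f) x (b i) (b i) := by
  simp [InnerProductSpace.laplacian_eq_iteratedFDeriv_orthonormalBasis f b,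
    iteratedFDeriv_two_apply]

theorem laplacian_comp_linearIsometryEquiv_add {f : E → ℝ} (L : E ≃ₗᵢ[ℝ] E) (c : E) {x : E}
    (hf : ContDiffAt ℝ 2 f (L x + c)) : Δ (fun y => f (L y + c)) x = Δ f (L x + c) := by
  let b := stdOrthonormalBasis ℝ E
  rw [laplacian_eq_sum_fderiv_fderiv b, laplacian_eq_sum_fderiv_fderiv (b.map L)]
  exact Finset.sum_congr rfl fun i _ =>
    fderiv_fderiv_comp_affine L.toContinuousLinearEquiv.toContinuousLinearMap c hf (b i) (b i)

theorem laplacian_slice_eq_sum {ι : Type*} [Fintype ι] (b : OrthonormalBasis ι ℝ E)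
    {G : ℝ → E → ℝ} {t : ℝ} {x : E} (hG : ContDiffAt ℝ 2 (uncurry G) (t, x)) :
    Δ (G t) x = ∑ i, fderiv ℝ (fderiv ℝ (uncurry G)) (t, x) (0, b i) (0, b i) := by
  rw [laplacian_eq_sum_fderiv_fderiv b]
  refine Finset.sum_congr rfl fun i _ => ?_
  have := fderiv_fderiv_comp_affine (f := uncurry G) (.inr ℝ ℝ E) (t, 0) (x := x)
    (by simpa using hG) (b i) (b i)
  simpa using this

theorem continuousOn_laplacian_slice {G : ℝ → E → ℝ} {Q : Set (ℝ × E)} (hQ : IsOpen Q)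
    (hG : ContDiffOn ℝ 2 (uncurry G) Q) : ContinuousOn (fun p => Δ (G p.1) p.2) Q := by
  refine (continuousOn_finsetSum Finset.univ fun i _ => continuousOn_fderiv_fderiv_apply hQ hG
    (0, stdOrthonormalBasis ℝ E i) (0, stdOrthonormalBasis ℝ E i)).congr fun p hp => ?_
  exact laplacian_slice_eq_sum _ (hG.contDiffAt (hQ.mem_nhds hp))

theorem laplacian_comp_norm_sub_sq {g : ℝ → ℝ} (hg : ContDiff ℝ 2 g) (x₀ x : E) :
    Δ (fun y => g (‖y - x₀‖ ^ 2)) x = 4 * ‖x - x₀‖ ^ 2 * deriv (deriv g) (‖x - x₀‖ ^ 2) +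
      2 * Module.finrank ℝ E * deriv g (‖x - x₀‖ ^ 2) := by
  have hsq (y : E) : HasFDerivAt (fun y => ‖y - x₀‖ ^ 2) ((2 : ℝ) • innerSL ℝ (y - x₀)) y := by
    simpa [two_smul] using ((hasFDerivAt_id y).sub_const x₀).norm_sq
  have hfirst : fderiv ℝ (fun y => g (‖y - x₀‖ ^ 2)) =
      fun y => deriv g (‖y - x₀‖ ^ 2) • (2 : ℝ) • innerSL ℝ (y - x₀) := by
    ext1 y
    exact ((hg.differentiable (by simp) _).hasDerivAt.comp_hasFDerivAt y (hsq y)).fderiv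
  have hderiv : HasFDerivAt (fun y => deriv g (‖y - x₀‖ ^ 2))
      (deriv (deriv g) (‖x - x₀‖ ^ 2) • (2 : ℝ) • innerSL ℝ (x - x₀)) x :=
    ((hg.iterate_deriv' 1 1).differentiable (by simp) _).hasDerivAt.comp_hasFDerivAt x (hsq x)
  have hinner : HasFDerivAt (fun y => (2 : ℝ) • innerSL ℝ (y - x₀)) ((2 : ℝ) • innerSL ℝ) x :=
    ((innerSL ℝ).hasFDerivAt.comp x (hasFDerivAt_sub_const x₀)).fun_const_smul 2
  have hsecond (v : E) (hv : ‖v‖ = 1) : fderiv ℝ (fderiv ℝ fun y => g (‖y - x₀‖ ^ 2)) x v v =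
      4 * deriv (deriv g) (‖x - x₀‖ ^ 2) * inner ℝ (x - x₀) v ^ 2 +
        2 * deriv g (‖x - x₀‖ ^ 2) := by
    rw [hfirst, (hderiv.fun_smul hinner).fderiv]
    have hvv : (innerSL ℝ : E →L[ℝ] E →L[ℝ] ℝ) v v = 1 :=
      (real_inner_self_eq_norm_sq v).trans (by rw [hv, one_pow])
    simp only [add_apply, smul_apply, ContinuousLinearMap.smulRight_apply, coe_innerSL_apply,
      smul_eq_mul, hvv, mul_one]
    ring
  let b := stdOrthonormalBasis ℝ E
  simp only [laplacian_eq_sum_fderiv_fderiv b, hsecond _ (b.norm_eq_one _), Finset.sum_add_distrib,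
    ← Finset.mul_sum, b.sum_sq_inner_left, Finset.sum_const, Finset.card_univ, Fintype.card_fin,
    nsmul_eq_mul]
  ring

end Laplacian

section Comparison

theorem eventually_forall_prodMk_mem {X Y : Type*} [TopologicalSpace X] [TopologicalSpace Y]
    {K : Set X} (hK : IsCompact K) {Q : Set (X × Y)} (hQ : IsOpen Q) {x : Y}
    (hKQ : ∀ t ∈ K, (t, x) ∈ Q) : ∀ᶠ y in 𝓝 x, ∀ t ∈ K, (t, y) ∈ Q :=
  hK.eventually_forall_of_forall_eventually fun t ht =>
    continuous_swap.continuousAt.eventually (hQ.mem_nhds (hKQ t ht))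

theorem setIntegral_le_setIntegral_max_zero {X : Type*} [MeasurableSpace X] {μ : Measure X}
    {S I : Set X} (hSI : S ⊆ I) {f : X → ℝ} (hf : IntegrableOn f I μ) :
    ∫ t in S, f t ∂μ ≤ ∫ t in I, max (f t) 0 ∂μ := by
  have hpos : IntegrableOn (fun t => max (f t) 0) I μ := Integrable.pos_part hf
  calc ∫ t in S, f t ∂μ ≤ ∫ t in S, max (f t) 0 ∂μ :=
        setIntegral_mono (hf.mono_set hSI) (hpos.mono_set hSI) fun _ => le_max_left _ _
    _ ≤ ∫ t in I, max (f t) 0 ∂μ :=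
        setIntegral_mono_set hpos (.of_forall fun _ => le_max_right _ _) hSI.eventuallyLE

theorem eventually_forall_lt_of_nonpos {X : Type*} [PseudoMetricSpace X] {T c : ℝ}
    (hT : 0 < T) (hc : 0 < c) {w : ℝ → X → ℝ} {D K : Set X} (hK : IsCompact K) (hDK : D ⊆ K)
    (hw : ContinuousOn (uncurry w) (Icc 0 T ×ˢ K)) (hw0 : ∀ x ∈ D, w 0 x ≤ 0) :
    ∀ᶠ t in 𝓝[>] 0, ∀ x ∈ D, w t x < c := by
  obtain ⟨δ, hδ, hunif⟩ := Metric.uniformContinuousOn_iff.1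
    ((isCompact_Icc.prod hK).uniformContinuousOn_of_continuous hw) c hc
  filter_upwards [Ioo_mem_nhdsGT (lt_min hδ hT)] with t ht x hx
  have hdist : dist (t, x) ((0 : ℝ), x) < δ := by
    simpa [Prod.dist_eq, abs_of_pos ht.1, hδ] using ht.2.trans_le (min_le_left δ T)
  have hclose := hunif (t, x) ⟨⟨ht.1.le, (ht.2.trans_le (min_le_right δ T)).le⟩, hDK hx⟩
    (0, x) ⟨⟨le_rfl, hT.le⟩, hDK hx⟩ hdist
  have := (abs_lt.1 (Real.dist_eq _ _ ▸ hclose)).2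
  simp only [uncurry_apply_pair] at this
  linarith [hw0 x hx]

theorem exists_pos_forall_mul_norm_sub_sq_lt {E : Type*} [SeminormedAddCommGroup E] {K : Set E}
    (hK : IsCompact K) (p : E) {m : ℝ} (hm : 0 < m) : ∃ c > 0, ∀ x ∈ K, c * ‖x - p‖ ^ 2 < m := by
  obtain ⟨M, hM⟩ := hK.exists_bound_of_continuousOn (f := fun x => ‖x - p‖ ^ 2) (by fun_prop)
  refine ⟨m / (|M| + 1), by positivity, fun x hx => ?_⟩
  rw [div_mul_eq_mul_div, div_lt_iff₀ (by positivity)]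
  gcongr
  linarith [le_norm_self (‖x - p‖ ^ 2), hM x hx, le_abs_self M]

theorem exists_isLocalMax_setIntegral_max_zero_add {E : Type*} [SeminormedAddCommGroup E]
    {I : Set ℝ} (hI : IsCompact I) {D K : Set E} (hD : IsOpen D) (hK : IsCompact K) (hDK : D ⊆ K)
    {G : ℝ → E → ℝ} (hG : ContinuousOn (uncurry G) (I ×ˢ K))
    (hlateral : ∀ t ∈ I, ∀ x ∈ K \ D, G t x ≤ 0) {c : ℝ} {p : E} (hp : p ∈ D)
    (hc : ∀ x ∈ K, c * ‖x - p‖ ^ 2 < ∫ t in I, max (G t p) 0) :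
    ∃ x ∈ D, IsLocalMax (fun y => (∫ t in I, max (G t y) 0) + c * ‖y - p‖ ^ 2) x := by
  refine hK.exists_isLocalMax_mem_open hDK ?_ (hDK hp) (fun x hx => ?_) hD
  · have hswap : ContinuousOn (uncurry fun y t => max (G t y) 0) (K ×ˢ I) :=
      (hG.comp (f := Prod.swap) continuous_swap.continuousOn fun q hq => ⟨hq.2, hq.1⟩).sup
        continuousOn_const
    exact (continuousOn_setIntegral hK hI hI.measurableSet subset_rfl hswap).add (by fun_prop)
  · have hzero : ∫ t in I, max (G t x) 0 = 0 :=
      setIntegral_eq_zero_of_forall_eq_zero fun t ht => max_eq_right (hlateral t ht x hx)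
    simpa [hzero] using hc x hx.1

theorem setIntegral_Icc_max_zero_pos {f : ℝ → ℝ} {a b : ℝ} (hab : a < b)
    (hf : ContinuousOn f (Icc a b)) (ha : 0 < f a) : 0 < ∫ t in Icc a b, max (f t) 0 := by
  rw [integral_Icc_eq_integral_Ioc, ← intervalIntegral.integral_of_le hab.le]
  exact intervalIntegral.integral_pos hab (hf.sup continuousOn_const) (fun _ _ => le_max_right _ _)
    ⟨a, left_mem_Icc.2 hab.le, lt_max_of_lt_left ha⟩

theorem hasLineDerivAt_setIntegral {E : Type*} [NormedAddCommGroup E] [NormedSpace ℝ E]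
    {f : ℝ × E → ℝ} {Q : Set (ℝ × E)} (hQ : IsOpen Q)
    (hf : ContDiffOn ℝ 1 f Q) {K S : Set ℝ} (hK : IsCompact K) (hS : MeasurableSet S)
    (hSK : S ⊆ K) {x : E} (hKQ : ∀ t ∈ K, (t, x) ∈ Q) (v : E) :
    HasLineDerivAt ℝ (fun y => ∫ t in S, f (t, y)) (∫ t in S, fderiv ℝ f (t, x) (0, v)) x v := by
  have htube : ∀ᶠ s : ℝ in 𝓝 0, ∀ t ∈ K, (t, x + s • v) ∈ Q :=
    Tendsto.eventually (f := fun s : ℝ => x + s • v) (Continuous.tendsto (by fun_prop) 0)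
      (eventually_forall_prodMk_mem hK hQ (by simpa using hKQ))
  have hline {s t : ℝ} (hst : (t, x + s • v) ∈ Q) :
      HasDerivAt (fun s : ℝ => f (t, x + s • v)) (fderiv ℝ f (t, x + s • v) (0, v)) s := by
    have hinner : HasDerivAt (fun s : ℝ => (t, x + s • v)) ((0 : ℝ), v) s :=
      (hasDerivAt_const s t).prodMk (by simpa using ((hasDerivAt_id s).smul_const v).const_add x)
    exact ((hf.contDiffAt (hQ.mem_nhds hst)).differentiableAt
      (by simp)).hasFDerivAt.comp_hasDerivAt s hinner
  have hf' : ContinuousOn (fun q => fderiv ℝ f q (0, v)) Q :=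
    (hf.continuousOn_fderiv_of_isOpen hQ le_rfl).clm_apply continuousOn_const
  have hderiv := hasDerivAt_setIntegral (μ := volume) hK hS hSK htube
    (f := fun s t => f (t, x + s • v)) (f' := fun s t => fderiv ℝ f (t, x + s • v) (0, v))
    (fun s hs => hf.continuousOn.comp (f := fun t => (t, x + s • v)) (by fun_prop) hs)
    (hf'.comp (f := fun q : ℝ × ℝ => (q.2, x + q.1 • v)) (by fun_prop)
      fun q hq => hq.1 q.2 hq.2)
    fun s hs t ht => hline (hs t ht)
  simpa [HasLineDerivAt] using hderiv

variable {E : Type*} [NormedAddCommGroup E] [InnerProductSpace ℝ E]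

theorem setIntegral_fderiv_fderiv_add_nonpos_of_isLocalMax {f : ℝ × E → ℝ} {Q : Set (ℝ × E)}
    (hQ : IsOpen Q) (hf : ContDiffOn ℝ 2 f Q) {K S : Set ℝ} (hK : IsCompact K)
    (hS : MeasurableSet S) (hSK : S ⊆ K) {x p : E} (hKQ : ∀ t ∈ K, (t, x) ∈ Q) {c : ℝ}
    (hmax : IsLocalMax (fun y => (∫ t in S, f (t, y)) + c * ‖y - p‖ ^ 2) x) (v : E) :
    (∫ t in S, fderiv ℝ (fderiv ℝ f) (t, x) (0, v) (0, v)) + 2 * c * ‖v‖ ^ 2 ≤ 0 := by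
  have hf' : ContDiffOn ℝ 1 (fun q => fderiv ℝ f q (0, v)) Q :=
    (hf.fderiv_of_isOpen hQ (by norm_num)).clm_apply contDiffOn_const
  have hsq (y : E) :
      HasLineDerivAt ℝ (fun y => c * ‖y - p‖ ^ 2) (c * (2 * inner ℝ (y - p) v)) y v := by
    simpa [inner_sub_left] using
      ((((hasFDerivAt_id y).sub_const p).norm_sq).const_mul c).hasLineDerivAt v
  have hinner :
      HasLineDerivAt ℝ (fun y => c * (2 * inner ℝ (y - p) v)) (c * (2 * ‖v‖ ^ 2)) x v := by
    simpa using ((((hasFDerivAt_id x).sub_const p).inner ℝ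
      (hasFDerivAt_const v x)).const_mul 2 |>.const_mul c).hasLineDerivAt v
  have hnear : ∀ᶠ y in 𝓝 x, HasLineDerivAt ℝ (fun y => (∫ t in S, f (t, y)) + c * ‖y - p‖ ^ 2)
      ((∫ t in S, fderiv ℝ f (t, y) (0, v)) + c * (2 * inner ℝ (y - p) v)) y v := by
    filter_upwards [eventually_forall_prodMk_mem hK hQ hKQ] with y hy
    exact (hasLineDerivAt_setIntegral hQ (hf.of_le (by norm_num)) hK hS hSK hy v).add (hsq y)
  have hfderiv (t : ℝ) (ht : t ∈ S) : fderiv ℝ (fun q => fderiv ℝ f q (0, v)) (t, x) (0, v) =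
      fderiv ℝ (fderiv ℝ f) (t, x) (0, v) (0, v) :=
    fderiv_fderiv_apply (hf.contDiffAt (hQ.mem_nhds (hKQ t (hSK ht)))) _ _
  have hle := lineDeriv_lineDeriv_nonpos_of_isLocalMax hmax hnear
    ((hasLineDerivAt_setIntegral hQ hf' hK hS hSK hKQ v).add hinner)
  rw [setIntegral_congr_fun hS hfderiv] at hle
  linarith

variable [FiniteDimensional ℝ E]

theorem setIntegral_laplacian_le_of_isLocalMax {G : ℝ → E → ℝ} {Q : Set (ℝ × E)}
    (hQ : IsOpen Q) (hG : ContDiffOn ℝ 2 (uncurry G) Q) {K S : Set ℝ} (hK : IsCompact K)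
    (hS : MeasurableSet S) (hSK : S ⊆ K) {x p : E} (hKQ : ∀ t ∈ K, (t, x) ∈ Q) {c : ℝ}
    (hmax : IsLocalMax (fun y => (∫ t in S, G t y) + c * ‖y - p‖ ^ 2) x) :
    ∫ t in S, Δ (G t) x ≤ -(2 * c * Module.finrank ℝ E) := by
  let b := stdOrthonormalBasis ℝ E
  have hint (i : Fin (Module.finrank ℝ E)) : IntegrableOn
      (fun t => fderiv ℝ (fderiv ℝ (uncurry G)) (t, x) (0, b i) (0, b i)) S :=
    ((continuousOn_fderiv_fderiv_apply hQ hG (0, b i) (0, b i)).comp (f := fun t => (t, x))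
      (by fun_prop) hKQ).integrableOn_compact hK |>.mono_set hSK
  calc ∫ t in S, Δ (G t) x
      = ∑ i, ∫ t in S, fderiv ℝ (fderiv ℝ (uncurry G)) (t, x) (0, b i) (0, b i) := by
        rw [← integral_finsetSum _ fun i _ => hint i]
        exact setIntegral_congr_fun hS fun t ht =>
          laplacian_slice_eq_sum b (hG.contDiffAt (hQ.mem_nhds (hKQ t (hSK ht))))
    _ ≤ ∑ _i : Fin (Module.finrank ℝ E), -(2 * c) := Finset.sum_le_sum fun i _ => by
        have := setIntegral_fderiv_fderiv_add_nonpos_of_isLocalMax hQ hG hK hS hSK hKQ hmax (b i)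
        rw [b.norm_eq_one] at this
        linarith
    _ = -(2 * c * Module.finrank ℝ E) := by
        simp only [Finset.sum_const, Finset.card_univ, Fintype.card_fin, nsmul_eq_mul]
        ring

theorem two_mul_finrank_le_of_isLocalMax {a b : ℝ} (hab : a ≤ b) {G w : ℝ → E → ℝ}
    {Q : Set (ℝ × E)} (hQ : IsOpen Q) (hG : ContDiffOn ℝ 2 (uncurry G) Q)
    {x p : E} (hxQ : ∀ t ∈ Icc a b, (t, x) ∈ Q)
    (hw : ∀ t ∈ Icc a b, HasDerivAt (fun s => w s x) (Δ (G t) x) t)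
    (hsign : ∀ t ∈ Icc a b, 0 < G t x ↔ 0 < w t x) {c : ℝ}
    (hmax : IsLocalMax (fun y => (∫ t in Icc a b, max (G t y) 0) + c * ‖y - p‖ ^ 2) x) :
    2 * c * Module.finrank ℝ E ≤ max (w a x) 0 := by
  let S := Icc a b ∩ {t | 0 < w t x}
  have hSI : S ⊆ Icc a b := inter_subset_left
  have hS : MeasurableSet S := measurableSet_inter_setOf_pos measurableSet_Icc
    fun t ht => (hw t ht).continuousAt.continuousWithinAt
  -- With `S` fixed, `y ↦ ∫ t in S, G t y` is `C²` and touches `∫ max G 0` from below at `x`.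
  have htouch : ∫ t in S, G t x = ∫ t in Icc a b, max (G t x) 0 := by
    rw [← inter_eq_self_of_subset_right hSI, ← setIntegral_indicator hS]
    refine setIntegral_congr_fun measurableSet_Icc fun t ht => ?_
    by_cases hpos : 0 < w t x
    · simp [S, ht.1, ht.2, hpos, ((hsign t ht).2 hpos).le]
    · simp [S, ht.1, ht.2, hpos, not_lt.1 (mt (hsign t ht).1 hpos)]
  have hbelow {y : E} (hy : ∀ t ∈ Icc a b, (t, y) ∈ Q) :
      ∫ t in S, G t y ≤ ∫ t in Icc a b, max (G t y) 0 :=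
    setIntegral_le_setIntegral_max_zero hSI <| ContinuousOn.integrableOn_Icc <|
      hG.continuousOn.comp (f := fun t => (t, y)) (by fun_prop) hy
  have hmaxS : IsLocalMax (fun y => (∫ t in S, G t y) + c * ‖y - p‖ ^ 2) x := by
    filter_upwards [hmax, eventually_forall_prodMk_mem isCompact_Icc hQ hxQ] with y hy hyQ
    linarith [hbelow hyQ]
  have hlap := setIntegral_laplacian_le_of_isLocalMax hQ hG isCompact_Icc hS hSI hxQ hmaxS
  have hftc := setIntegral_deriv_pos_eq_sub hab hw ((continuousOn_laplacian_slice hQ hG).comp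
    (f := fun t => (t, x)) (by fun_prop) hxQ)
  linarith [le_max_right (w b x) 0]

theorem nonpos_of_hasDerivAt_laplacian [Nontrivial E] {T : ℝ} {D K : Set E} (hD : IsOpen D)
    (hK : IsCompact K) (hDK : D ⊆ K) {G w : ℝ → E → ℝ}
    (hG : ContDiffOn ℝ 2 (uncurry G) (Ioo 0 T ×ˢ D))
    (hGc : ContinuousOn (uncurry G) (Icc 0 T ×ˢ K))
    (hwc : ContinuousOn (uncurry w) (Icc 0 T ×ˢ K))
    (hw : ∀ t ∈ Ioo 0 T, ∀ x ∈ D, HasDerivAt (fun s => w s x) (Δ (G t) x) t)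
    (hsign : ∀ t ∈ Ioo 0 T, ∀ x ∈ D, 0 < G t x ↔ 0 < w t x)
    (hlateral : ∀ t ∈ Ioo 0 T, ∀ x ∈ K \ D, G t x ≤ 0) (hinit : ∀ x ∈ D, w 0 x ≤ 0) :
    ∀ t ∈ Ioo 0 T, ∀ x ∈ D, G t x ≤ 0 := by
  intro t₀ ht₀ p hp
  by_contra! hpos
  obtain ⟨b, hb₀, hbT⟩ := exists_between ht₀.2
  have hslice : ContinuousOn (fun t => G t p) (Icc 0 T) :=
    hGc.comp (f := fun t => (t, p)) (by fun_prop) fun t ht => ⟨ht, hDK hp⟩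
  obtain ⟨c, hc, hcK⟩ := exists_pos_forall_mul_norm_sub_sq_lt hK p <|
    setIntegral_Icc_max_zero_pos hb₀ (hslice.mono (Icc_subset_Icc ht₀.1.le hbT.le)) hpos
  obtain ⟨a, hwa, ha0, hat₀⟩ := ((eventually_forall_lt_of_nonpos (ht₀.1.trans ht₀.2) hc hK hDK hwc
    hinit).and (Ioo_mem_nhdsGT ht₀.1)).exists
  have hIoo : Icc a b ⊆ Ioo 0 T := Icc_subset_Ioo ha0 hbT
  have hIcc : Icc a b ⊆ Icc 0 T := hIoo.trans Ioo_subset_Icc_self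
  have henlarge : ∫ t in Icc t₀ b, max (G t p) 0 ≤ ∫ t in Icc a b, max (G t p) 0 :=
    setIntegral_mono_set ((hslice.mono hIcc).sup continuousOn_const).integrableOn_Icc
      (.of_forall fun t => le_max_right _ _) (Icc_subset_Icc_left hat₀.le).eventuallyLE
  obtain ⟨x, hxD, hmax⟩ := exists_isLocalMax_setIntegral_max_zero_add isCompact_Icc hD hK hDK
    (hGc.mono (prod_mono_left hIcc)) (fun t ht => hlateral t (hIoo ht)) hp
    fun x hx => (hcK x hx).trans_le henlarge
  have hle := two_mul_finrank_le_of_isLocalMax (hat₀.trans hb₀).le (isOpen_Ioo.prod hD) hG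
    (fun t ht => ⟨hIoo ht, hxD⟩) (fun t ht => hw t (hIoo ht) x hxD)
    (fun t ht => hsign t (hIoo ht) x hxD) hmax
  have hdim : (1 : ℝ) ≤ Module.finrank ℝ E := by exact_mod_cast Module.finrank_pos
  nlinarith [max_lt (hwa x hxD) hc]

end Comparison

section Reflection

variable {E : Type*} [NormedAddCommGroup E] [InnerProductSpace ℝ E]

/-- The reflection across the affine hyperplane `{z | ⟪e, z⟫ = κ}`. It is given by its formula,
which is a reflection only for a unit vector `e`. -/
def hyperplaneReflection (e : E) (κ : ℝ) (z : E) : E :=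
  z - (2 * (⟪e, z⟫ - κ)) • e

variable {e : E} {κ : ℝ}

theorem hyperplaneReflection_of_inner_eq {z : E} (hz : ⟪e, z⟫ = κ) :
    hyperplaneReflection e κ z = z := by
  simp [hyperplaneReflection, hz]

theorem contDiff_hyperplaneReflection {n : ℕ∞ω} :
    ContDiff ℝ n (hyperplaneReflection e κ) :=
  contDiff_id.sub
    ((contDiff_const.mul ((contDiff_const.inner ℝ contDiff_id).sub contDiff_const)).smul
      contDiff_const)

theorem hyperplaneReflection_eq_reflection_add (he : ‖e‖ = 1) (z : E) :
    hyperplaneReflection e κ z = (ℝ ∙ e)ᗮ.reflection z + (2 * κ) • e := by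
  rw [Submodule.reflection_orthogonal_apply, Submodule.reflection_singleton_apply, he]
  simp only [hyperplaneReflection, RCLike.ofReal_real_eq_id, id_eq, one_pow, div_one]
  module

theorem norm_hyperplaneReflection_sub_le (he : ‖e‖ = 1) {p z : E} (hp : ⟪e, p⟫ ≤ κ)
    (hz : κ ≤ ⟪e, z⟫) : ‖hyperplaneReflection e κ z - p‖ ≤ ‖z - p‖ := by
  have hsq : ‖hyperplaneReflection e κ z - p‖ ^ 2 =
      ‖z - p‖ ^ 2 - 4 * (⟪e, z⟫ - κ) * (κ - ⟪e, p⟫) := by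
    rw [hyperplaneReflection, sub_right_comm, norm_sub_sq_real, norm_smul, he, inner_smul_right,
      real_inner_comm e, inner_sub_right, Real.norm_eq_abs, mul_one, sq_abs]
    ring
  refine le_of_sq_le_sq ?_ (norm_nonneg _)
  nlinarith [mul_nonneg (sub_nonneg.2 hz) (sub_nonneg.2 hp)]

theorem hyperplaneReflection_mem_ball (he : ‖e‖ = 1) {p z : E} {r : ℝ} (hκ : ⟪e, p⟫ ≤ κ)
    (hz : z ∈ ball p r) (hzκ : κ ≤ ⟪e, z⟫) : hyperplaneReflection e κ z ∈ ball p r := by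
  rw [mem_ball_iff_norm] at hz ⊢
  exact (norm_hyperplaneReflection_sub_le he hκ hzκ).trans_lt hz

theorem hyperplaneReflection_mem_closedBall (he : ‖e‖ = 1) {p z : E} {r : ℝ} (hκ : ⟪e, p⟫ ≤ κ)
    (hz : z ∈ closedBall p r) (hzκ : κ ≤ ⟪e, z⟫) :
    hyperplaneReflection e κ z ∈ closedBall p r := by
  rw [mem_closedBall_iff_norm] at hz ⊢
  exact (norm_hyperplaneReflection_sub_le he hκ hzκ).trans hz

theorem laplacian_comp_hyperplaneReflection [FiniteDimensional ℝ E] (he : ‖e‖ = 1) {f : E → ℝ}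
    {x : E} (hf : ContDiffAt ℝ 2 f (hyperplaneReflection e κ x)) :
    Δ (fun y => f (hyperplaneReflection e κ y)) x = Δ f (hyperplaneReflection e κ x) := by
  simp only [hyperplaneReflection_eq_reflection_add he] at hf ⊢
  exact laplacian_comp_linearIsometryEquiv_add (ℝ ∙ e)ᗮ.reflection _ hf

theorem exists_hyperplaneReflection_eq_midpoint {p x : E} (hx : x ≠ p) :
    ∃ (e : E) (κ : ℝ), ‖e‖ = 1 ∧ κ - ⟪e, p⟫ = 3 / 4 * ‖x - p‖ ∧ κ < ⟪e, x⟫ ∧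
      hyperplaneReflection e κ x = midpoint ℝ p x := by
  have hpos : 0 < ‖x - p‖ := norm_sub_pos_iff.2 hx
  let e : E := ‖x - p‖⁻¹ • (x - p)
  have hinner : ⟪e, x⟫ = ⟪e, p⟫ + ‖x - p‖ := by
    rw [← sub_eq_iff_eq_add', ← inner_sub_right, real_inner_smul_left, real_inner_self_eq_norm_sq]
    field
  refine ⟨e, ⟪e, p⟫ + 3 / 4 * ‖x - p‖, norm_smul_inv_norm (𝕜 := ℝ) (sub_ne_zero.2 hx), by ring,
    by linarith, ?_⟩
  have hcoeff : 2 * (⟪e, x⟫ - (⟪e, p⟫ + 3 / 4 * ‖x - p‖)) * ‖x - p‖⁻¹ = 1 / 2 := by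
    rw [hinner]
    field
  rw [hyperplaneReflection, smul_smul, hcoeff, midpoint_eq_smul_add, invOf_eq_inv]
  module

end Reflection

/-- `u` is a nonnegative solution of `∂ₜu = Δ(u ^ m)` on `(0, T) × B_ρ(x₀)` with zero lateral
boundary values: positive and `C²` inside, continuous up to the boundary. Neither the initial
datum nor the value at time `T` is prescribed, and `m` is any exponent. -/
structure IsDirichletDiffusion {E : Type*} [NormedAddCommGroup E] [InnerProductSpace ℝ E]
    [FiniteDimensional ℝ E] (m : ℝ) (x₀ : E) (ρ T : ℝ) (u : ℝ → E → ℝ) : Prop where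
  nonneg : ∀ t ∈ Icc 0 T, ∀ x ∈ closedBall x₀ ρ, 0 ≤ u t x
  continuousOn : ContinuousOn (uncurry u) (Icc 0 T ×ˢ closedBall x₀ ρ)
  pos : ∀ t ∈ Ioo 0 T, ∀ x ∈ ball x₀ ρ, 0 < u t x
  contDiffOn : ContDiffOn ℝ 2 (uncurry u) (Ioo 0 T ×ˢ ball x₀ ρ)
  hasDerivAt : ∀ t ∈ Ioo 0 T, ∀ x ∈ ball x₀ ρ,
    HasDerivAt (fun s => u s x) (Δ (fun y => u t y ^ m) x) t
  eq_zero : ∀ t ∈ Ioo 0 T, ∀ x ∈ sphere x₀ ρ, u t x = 0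

namespace IsDirichletDiffusion

variable {E : Type*} [NormedAddCommGroup E] [InnerProductSpace ℝ E] [FiniteDimensional ℝ E]
  {m : ℝ} {x₀ : E} {ρ T : ℝ} {u : ℝ → E → ℝ}

theorem continuousOn_rpow (hu : IsDirichletDiffusion m x₀ ρ T u) (hm : 0 ≤ m) :
    ContinuousOn (uncurry fun t x => u t x ^ m) (Icc 0 T ×ˢ closedBall x₀ ρ) :=
  hu.continuousOn.rpow_const fun _ _ => .inr hm

theorem contDiffOn_rpow (hu : IsDirichletDiffusion m x₀ ρ T u) :
    ContDiffOn ℝ 2 (uncurry fun t x => u t x ^ m) (Ioo 0 T ×ˢ ball x₀ ρ) :=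
  hu.contDiffOn.rpow_const_of_ne fun p hp => (hu.pos p.1 hp.1 p.2 hp.2).ne'

theorem contDiffOn_rpow_slice (hu : IsDirichletDiffusion m x₀ ρ T u) {t : ℝ} (ht : t ∈ Ioo 0 T) :
    ContDiffOn ℝ 2 (fun x => u t x ^ m) (ball x₀ ρ) :=
  hu.contDiffOn_rpow.comp (contDiff_prodMk_right t).contDiffOn fun _ hx => ⟨ht, hx⟩

section Reflection

variable {e : E} {κ : ℝ}

theorem hasDerivAt_sub_hyperplaneReflection (hu : IsDirichletDiffusion m x₀ ρ T u)
    (he : ‖e‖ = 1) (hκ : ⟪e, x₀⟫ ≤ κ) {t : ℝ} (ht : t ∈ Ioo 0 T) {z : E} (hz : z ∈ ball x₀ ρ)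
    (hzκ : κ ≤ ⟪e, z⟫) :
    HasDerivAt (fun s => u s z - u s (hyperplaneReflection e κ z))
      (Δ (fun y => u t y ^ m - u t (hyperplaneReflection e κ y) ^ m) z) t := by
  have hσz := hyperplaneReflection_mem_ball he hκ hz hzκ
  have hsmooth {y : E} (hy : y ∈ ball x₀ ρ) : ContDiffAt ℝ 2 (fun x => u t x ^ m) y :=
    (hu.contDiffOn_rpow_slice ht).contDiffAt (isOpen_ball.mem_nhds hy)
  have hlap : Δ (fun y => u t y ^ m - u t (hyperplaneReflection e κ y) ^ m) z =
      Δ (fun y => u t y ^ m) z - Δ (fun y => u t y ^ m) (hyperplaneReflection e κ z) := by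
    rw [← laplacian_comp_hyperplaneReflection he (hsmooth hσz)]
    exact (hsmooth hz).laplacian_sub
      ((hsmooth hσz).comp z contDiff_hyperplaneReflection.contDiffAt)
  rw [hlap]
  exact (hu.hasDerivAt t ht z hz).sub (hu.hasDerivAt t ht _ hσz)

theorem rpow_le_rpow_hyperplaneReflection_of_notMem_cap (hu : IsDirichletDiffusion m x₀ ρ T u)
    (hm : 0 < m) (he : ‖e‖ = 1) (hκ : ⟪e, x₀⟫ ≤ κ) {t : ℝ} (ht : t ∈ Ioo 0 T) {z : E}
    (hz : z ∈ closedBall x₀ ρ) (hzκ : κ ≤ ⟪e, z⟫) (hcap : z ∉ ball x₀ ρ ∩ {z | κ < ⟪e, z⟫}) :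
    u t z ^ m ≤ u t (hyperplaneReflection e κ z) ^ m := by
  by_cases hzball : z ∈ ball x₀ ρ
  · have : ⟪e, z⟫ = κ := le_antisymm (not_lt.1 fun h => hcap ⟨hzball, h⟩) hzκ
    rw [hyperplaneReflection_of_inner_eq this]
  · have hsphere : z ∈ sphere x₀ ρ := le_antisymm hz (not_lt.1 hzball)
    rw [hu.eq_zero t ht z hsphere, zero_rpow hm.ne']
    exact rpow_nonneg (hu.nonneg t (Ioo_subset_Icc_self ht) _
      (hyperplaneReflection_mem_closedBall he hκ hz hzκ)) m

theorem le_hyperplaneReflection [Nontrivial E] (hu : IsDirichletDiffusion m x₀ ρ T u)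
    (hm : 0 < m) (he : ‖e‖ = 1) (hκ : ⟪e, x₀⟫ ≤ κ)
    (hinit : ∀ z ∈ ball x₀ ρ, κ < ⟪e, z⟫ → u 0 z ≤ u 0 (hyperplaneReflection e κ z))
    {t : ℝ} (ht : t ∈ Ioo 0 T) {z : E} (hz : z ∈ ball x₀ ρ) (hzκ : κ < ⟪e, z⟫) :
    u t z ≤ u t (hyperplaneReflection e κ z) := by
  let σ := hyperplaneReflection e κ
  let D := ball x₀ ρ ∩ {z | κ < ⟪e, z⟫}
  let K := closedBall x₀ ρ ∩ {z | κ ≤ ⟪e, z⟫}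
  have hD : IsOpen D := isOpen_ball.inter (isOpen_lt (by fun_prop) (by fun_prop))
  have hK : IsCompact K :=
    (isCompact_closedBall x₀ ρ).inter_right (isClosed_le (by fun_prop) (by fun_prop))
  have hDK : D ⊆ K := inter_subset_inter ball_subset_closedBall fun _ => le_of_lt (a := κ)
  have hσD {z : E} (hz : z ∈ D) : σ z ∈ ball x₀ ρ :=
    hyperplaneReflection_mem_ball he hκ hz.1 hz.2.le
  have hσ : ContDiff ℝ 2 fun p : ℝ × E => (p.1, σ p.2) :=
    contDiff_fst.prodMk (contDiff_hyperplaneReflection.comp contDiff_snd)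
  have hcont {f : ℝ → E → ℝ} (hf : ContinuousOn (uncurry f) (Icc 0 T ×ˢ closedBall x₀ ρ)) :
      ContinuousOn (uncurry fun t z => f t z - f t (σ z)) (Icc 0 T ×ˢ K) :=
    (hf.mono (prod_mono_right inter_subset_left)).sub <| hf.comp hσ.continuous.continuousOn
      fun p hp => ⟨hp.1, hyperplaneReflection_mem_closedBall he hκ hp.2.1 hp.2.2⟩
  have hsmooth : ContDiffOn ℝ 2 (uncurry fun t z => u t z ^ m - u t (σ z) ^ m) (Ioo 0 T ×ˢ D) :=
    (hu.contDiffOn_rpow.mono (prod_mono_right inter_subset_left)).sub <|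
      hu.contDiffOn_rpow.comp hσ.contDiffOn fun p hp => ⟨hp.1, hσD hp.2⟩
  have hrpow {t : ℝ} (ht : t ∈ Ioo 0 T) {z : E} (hz : z ∈ D) :
      u t z ^ m ≤ u t (σ z) ^ m ↔ u t z ≤ u t (σ z) :=
    rpow_le_rpow_iff (hu.pos t ht z hz.1).le (hu.pos t ht _ (hσD hz)).le hm
  refine (hrpow ht ⟨hz, hzκ⟩).1 <| sub_nonpos.1 <| nonpos_of_hasDerivAt_laplacian hD hK hDK hsmooth
    (hcont (hu.continuousOn_rpow hm.le)) (hcont hu.continuousOn)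
    (fun t ht z hz => hu.hasDerivAt_sub_hyperplaneReflection he hκ ht hz.1 hz.2.le)
    (fun t ht z hz => ?_) (fun t ht z hz => sub_nonpos.2 ?_)
    (fun z hz => sub_nonpos.2 (hinit z hz.1 hz.2)) t ht z ⟨hz, hzκ⟩
  · rw [sub_pos, sub_pos, ← not_le, ← not_le, hrpow ht hz]
  · exact hu.rpow_le_rpow_hyperplaneReflection_of_notMem_cap hm he hκ ht hz.1.1 hz.1.2 hz.2

theorem le_midpoint [Nontrivial E] (hu : IsDirichletDiffusion m x₀ ρ T u) (hm : 0 < m) {R : ℝ}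
    (hR : 0 < R) (hinit : ∀ x ∈ ball x₀ ρ \ closedBall x₀ R, u 0 x = 0) {t : ℝ} (ht : t ∈ Ico 0 T)
    {x : E} (hx : x ∈ ball x₀ ρ) (hxR : 2 * R ≤ ‖x - x₀‖) : u t x ≤ u t (midpoint ℝ x₀ x) := by
  have hnorm (z : E) (hz : z ∈ ball x₀ ρ) (hRz : R < ‖z - x₀‖) : u 0 z = 0 :=
    hinit z ⟨hz, by simpa [dist_eq_norm] using hRz⟩
  have hx₀ : x ≠ x₀ := fun h => by
    rw [h, sub_self, norm_zero] at hxR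
    linarith
  obtain ⟨e, κ, he, hκ, hκx, hmid⟩ := exists_hyperplaneReflection_eq_midpoint hx₀
  have hκ₀ : ⟪e, x₀⟫ ≤ κ := by linarith
  have hcap (z : E) (hz : z ∈ ball x₀ ρ) (hκz : κ < ⟪e, z⟫) :
      u 0 z ≤ u 0 (hyperplaneReflection e κ z) := by
    have hle : ⟪e, z - x₀⟫ ≤ ‖z - x₀‖ := by simpa [he] using real_inner_le_norm e (z - x₀)
    rw [inner_sub_right] at hle
    rw [hnorm z hz (by linarith)]
    exact hu.nonneg 0 ⟨le_rfl, ht.1.trans ht.2.le⟩ _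
      (ball_subset_closedBall (hyperplaneReflection_mem_ball he hκ₀ hz hκz.le))
  rw [← hmid]
  rcases ht.1.eq_or_lt with rfl | ht0
  · exact hcap x hx hκx
  · exact hu.le_hyperplaneReflection hm he hκ₀ hcap ⟨ht0, ht.2⟩ hx hκx

end Reflection

end IsDirichletDiffusion

section Contraction

variable {E : Type*} [NormedAddCommGroup E] [NormedSpace ℝ E] [FiniteDimensional ℝ E]
  [MeasurableSpace E] [BorelSpace E] {μ : Measure E} [μ.IsAddHaarMeasure]

theorem integral_comp_midpoint (f : E → ℝ) (p : E) :
    ∫ x, f (midpoint ℝ p x) ∂μ = 2 ^ Module.finrank ℝ E * ∫ x, f x ∂μ := by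
  simp only [midpoint_eq_smul_add, invOf_eq_inv]
  rw [integral_add_left_eq_self (fun x => f ((2 : ℝ)⁻¹ • x)) p, Measure.integral_comp_smul]
  simp

theorem integrable_comp_midpoint {f : E → ℝ} (hf : Integrable f μ) (p : E) :
    Integrable (fun x => f (midpoint ℝ p x)) μ := by
  simp only [midpoint_eq_smul_add, invOf_eq_inv]
  exact (hf.comp_smul (inv_ne_zero two_ne_zero)).comp_add_left p

theorem setIntegral_ball_le_of_le_midpoint {g : E → ℝ} {p : E} {r r' : ℝ} (hr' : r / 2 ≤ r')
    (hr'r : r' ≤ r) (hg : IntegrableOn g (ball p r) μ) (hnonneg : ∀ x ∈ ball p r', 0 ≤ g x)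
    (hmid : ∀ x ∈ ball p r \ ball p r', g x ≤ g (midpoint ℝ p x)) :
    ∫ x in ball p r, g x ∂μ ≤ (1 + 2 ^ Module.finrank ℝ E) * ∫ x in ball p r', g x ∂μ := by
  let f := (ball p r').indicator g
  have hsub : ball p r' ⊆ ball p r := ball_subset_ball hr'r
  have hf : Integrable f μ := (hg.mono_set hsub).integrable_indicator measurableSet_ball
  have hf_comp : Integrable (fun x => f (midpoint ℝ p x)) μ := integrable_comp_midpoint hf p
  have hf_nonneg (x : E) : 0 ≤ f x := indicator_nonneg hnonneg x
  have hmid_mem {x : E} (hx : x ∈ ball p r) : midpoint ℝ p x ∈ ball p r' := by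
    rw [mem_ball, dist_comm] at hx
    rw [mem_ball, dist_midpoint_left, Real.norm_two]
    linarith
  have houter : ∫ x in ball p r \ ball p r', g x ∂μ ≤
      2 ^ Module.finrank ℝ E * ∫ x in ball p r', g x ∂μ :=
    calc ∫ x in ball p r \ ball p r', g x ∂μ
        ≤ ∫ x in ball p r \ ball p r', f (midpoint ℝ p x) ∂μ :=
          setIntegral_mono_on (hg.mono_set sdiff_subset) hf_comp.integrableOn
            (measurableSet_ball.diff measurableSet_ball) fun x hx =>
              (hmid x hx).trans_eq (indicator_of_mem (hmid_mem hx.1) g).symm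
      _ ≤ ∫ x, f (midpoint ℝ p x) ∂μ :=
          setIntegral_le_integral hf_comp (.of_forall fun x => hf_nonneg _)
      _ = 2 ^ Module.finrank ℝ E * ∫ x in ball p r', g x ∂μ := by
          rw [integral_comp_midpoint, integral_indicator measurableSet_ball]
  have hsplit := integral_inter_add_sdiff (t := ball p r') measurableSet_ball hg
  rw [inter_eq_self_of_subset_right hsub] at hsplit
  linarith

end Contraction

section IntegrationByParts

variable {E : Type*} [NormedAddCommGroup E] [MeasurableSpace E] [BorelSpace E]
  {μ : Measure E} {U : Set E} {χ f : E → ℝ}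

theorem integrable_mul_of_tsupport_subset [IsFiniteMeasureOnCompacts μ] (hU : IsOpen U)
    (hχ : Continuous χ) (hχc : HasCompactSupport χ) (hχU : tsupport χ ⊆ U)
    (hf : ContinuousOn f U) : Integrable (fun x => χ x * f x) μ := by
  have hcont : Continuous fun x => χ x * f x := continuous_of_tsupport fun x hx =>
    hχ.continuousAt.mul (hf.continuousAt (hU.mem_nhds (hχU (tsupport_mul_subset_left hx))))
  exact hcont.integrable_of_hasCompactSupport hχc.mul_right

theorem integral_mul_fderiv_eq_neg_of_tsupport_subset [NormedSpace ℝ E] [FiniteDimensional ℝ E]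
    [μ.IsAddHaarMeasure] (hU : IsOpen U) (hχ : ContDiff ℝ 1 χ) (hχc : HasCompactSupport χ)
    (hχU : tsupport χ ⊆ U) (hf : ContDiffOn ℝ 1 f U) (v : E) :
    ∫ x, χ x * fderiv ℝ f x v ∂μ = -∫ x, fderiv ℝ χ x v * f x ∂μ := by
  refine integral_mul_fderiv_eq_neg_fderiv_mul_of_integrable ?_ ?_ ?_
    (fun x _ => hχ.differentiable (by simp) x)
    fun x hx => (hf.contDiffAt (hU.mem_nhds (hχU hx))).differentiableAt (by simp)
  · exact integrable_mul_of_tsupport_subset hU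
      ((hχ.continuous_fderiv (by simp)).clm_apply continuous_const) (hχc.fderiv_apply ℝ v)
      ((tsupport_fderiv_apply_subset ℝ v).trans hχU) hf.continuousOn
  · exact integrable_mul_of_tsupport_subset hU hχ.continuous hχc hχU
      ((hf.continuousOn_fderiv_of_isOpen hU le_rfl).clm_apply continuousOn_const)
  · exact integrable_mul_of_tsupport_subset hU hχ.continuous hχc hχU hf.continuousOn

theorem integral_mul_fderiv_fderiv_of_tsupport_subset [NormedSpace ℝ E] [FiniteDimensional ℝ E]
    [μ.IsAddHaarMeasure] (hU : IsOpen U) (hχ : ContDiff ℝ 2 χ) (hχc : HasCompactSupport χ)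
    (hχU : tsupport χ ⊆ U) (hf : ContDiffOn ℝ 2 f U) (v : E) :
    ∫ x, χ x * fderiv ℝ (fderiv ℝ f) x v v ∂μ = ∫ x, fderiv ℝ (fderiv ℝ χ) x v v * f x ∂μ := by
  have hleft (x : E) : χ x * fderiv ℝ (fderiv ℝ f) x v v =
      χ x * fderiv ℝ (fun y => fderiv ℝ f y v) x v := by
    by_cases hx : x ∈ tsupport χ
    · rw [fderiv_fderiv_apply (hf.contDiffAt (hU.mem_nhds (hχU hx)))]
    · rw [image_eq_zero_of_notMem_tsupport hx, zero_mul, zero_mul]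
  simp only [hleft, ← fderiv_fderiv_apply hχ.contDiffAt v v]
  rw [integral_mul_fderiv_eq_neg_of_tsupport_subset hU (hχ.of_le (by norm_num)) hχc hχU
      ((hf.fderiv_of_isOpen hU (by norm_num)).clm_apply contDiffOn_const),
    integral_mul_fderiv_eq_neg_of_tsupport_subset hU
      ((hχ.fderiv_right (by norm_num)).clm_apply contDiff_const) (hχc.fderiv_apply ℝ v)
      ((tsupport_fderiv_apply_subset ℝ v).trans hχU) (hf.of_le (by norm_num)), neg_neg]

theorem integral_mul_laplacian_of_tsupport_subset [InnerProductSpace ℝ E] [FiniteDimensional ℝ E]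
    [μ.IsAddHaarMeasure] (hU : IsOpen U) (hχ : ContDiff ℝ 2 χ) (hχc : HasCompactSupport χ)
    (hχU : tsupport χ ⊆ U) (hf : ContDiffOn ℝ 2 f U) :
    ∫ x, χ x * Δ f x ∂μ = ∫ x, Δ χ x * f x ∂μ := by
  let b := stdOrthonormalBasis ℝ E
  have hχ'' (v : E) : Continuous fun x => fderiv ℝ (fderiv ℝ χ) x v v := by
    simpa [← continuousOn_univ] using
      continuousOn_fderiv_fderiv_apply isOpen_univ hχ.contDiffOn v v
  have hsupp (v : E) : tsupport (fun x => fderiv ℝ (fderiv ℝ χ) x v v) ⊆ tsupport χ := by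
    simp only [← fderiv_fderiv_apply hχ.contDiffAt v v]
    exact (tsupport_fderiv_apply_subset ℝ v).trans (tsupport_fderiv_apply_subset ℝ v)
  simp only [laplacian_eq_sum_fderiv_fderiv b, Finset.mul_sum, Finset.sum_mul]
  rw [integral_finsetSum _ fun i _ => integrable_mul_of_tsupport_subset hU hχ.continuous hχc hχU
      (continuousOn_fderiv_fderiv_apply hU hf (b i) (b i)),
    integral_finsetSum _ fun i _ => integrable_mul_of_tsupport_subset hU (hχ'' (b i))
      (hχc.mono' (subset_closure.trans (hsupp (b i)))) ((hsupp (b i)).trans hχU) hf.continuousOn]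
  exact Finset.sum_congr rfl fun i _ =>
    integral_mul_fderiv_fderiv_of_tsupport_subset hU hχ hχc hχU hf (b i)

end IntegrationByParts

section Cutoff

theorem hasCompactSupport_deriv_smoothTransition : HasCompactSupport (deriv smoothTransition) := by
  refine .intro (isCompact_Icc (a := (0 : ℝ)) (b := 1)) fun x hx => ?_
  rcases not_and_or.1 hx with hneg | hgt
  · have : smoothTransition =ᶠ[𝓝 x] fun _ => 0 := by
      filter_upwards [Iio_mem_nhds (not_le.1 hneg)] with y hy
      exact smoothTransition.zero_of_nonpos (le_of_lt hy)
    rw [this.deriv_eq, deriv_const]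
  · have : smoothTransition =ᶠ[𝓝 x] fun _ => 1 := by
      filter_upwards [Ioi_mem_nhds (not_le.1 hgt)] with y hy
      exact smoothTransition.one_of_one_le (le_of_lt hy)
    rw [this.deriv_eq, deriv_const]

theorem exists_forall_abs_deriv_smoothTransition_le : ∃ M > 0,
    ∀ y, |deriv smoothTransition y| ≤ M ∧ |deriv (deriv smoothTransition) y| ≤ M := by
  have hfirst : ContDiff ℝ 1 (deriv smoothTransition) :=
    (smoothTransition.contDiff (n := 2)).iterate_deriv' 1 1
  obtain ⟨M₁, hM₁⟩ := hfirst.continuous.bounded_above_of_compact_support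
    hasCompactSupport_deriv_smoothTransition
  obtain ⟨M₂, hM₂⟩ := (hfirst.continuous_deriv le_rfl).bounded_above_of_compact_support
    hasCompactSupport_deriv_smoothTransition.deriv
  exact ⟨max 1 (max M₁ M₂), by positivity,
    fun y => ⟨(hM₁ y).trans (by simp), (hM₂ y).trans (by simp)⟩⟩

variable {E : Type*} [NormedAddCommGroup E] {p : E} {r₁ r₂ : ℝ}

/-- A smooth radial cutoff function, equal to `1` on `B_{r₁}(p)` and to `0` off `B_{r₂}(p)` when
`0 ≤ r₁ < r₂`. Interpolating in `‖x - p‖ ^ 2` rather than `‖x - p‖` keeps it smooth at `p`. -/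
noncomputable def ballCutoff (p : E) (r₁ r₂ : ℝ) (x : E) : ℝ :=
  smoothTransition ((r₂ ^ 2 - ‖x - p‖ ^ 2) / (r₂ ^ 2 - r₁ ^ 2))

theorem ballCutoff_nonneg (x : E) : 0 ≤ ballCutoff p r₁ r₂ x := smoothTransition.nonneg _

theorem ballCutoff_le_one (x : E) : ballCutoff p r₁ r₂ x ≤ 1 := smoothTransition.le_one _

theorem ballCutoff_eq_one (hr₁ : 0 ≤ r₁) (hr : r₁ < r₂) {x : E} (hx : x ∈ ball p r₁) :
    ballCutoff p r₁ r₂ x = 1 := by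
  rw [mem_ball_iff_norm] at hx
  refine smoothTransition.one_of_one_le ((one_le_div (by nlinarith)).2 ?_)
  gcongr

theorem tsupport_ballCutoff_subset (hr₁ : 0 ≤ r₁) (hr : r₁ < r₂) :
    tsupport (ballCutoff p r₁ r₂) ⊆ closedBall p r₂ := by
  refine closure_minimal (fun x hx => ?_) isClosed_closedBall
  by_contra hfar
  rw [mem_closedBall_iff_norm, not_le] at hfar
  exact hx <| smoothTransition.zero_of_nonpos <|
    div_nonpos_of_nonpos_of_nonneg (by nlinarith) (by nlinarith)

variable [InnerProductSpace ℝ E]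

theorem contDiff_ballCutoff {n : ℕ∞} : ContDiff ℝ n (ballCutoff p r₁ r₂) :=
  smoothTransition.contDiff.comp
    ((contDiff_const.sub ((contDiff_id.sub contDiff_const).norm_sq ℝ)).div_const _)

variable [FiniteDimensional ℝ E]

theorem laplacian_eq_zero_of_eventuallyEq_const {f : E → ℝ} {x : E} {c : ℝ}
    (hf : f =ᶠ[𝓝 x] fun _ => c) : Δ f x = 0 := by
  simp [(InnerProductSpace.laplacian_congr_nhds hf).eq_of_nhds, InnerProductSpace.laplacian_const]

theorem laplacian_ballCutoff_eq_zero (hr₁ : 0 ≤ r₁) (hr : r₁ < r₂) {x : E}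
    (hx : x ∉ closedBall p r₂ \ ball p r₁) : Δ (ballCutoff p r₁ r₂) x = 0 := by
  by_cases hin : x ∈ ball p r₁
  · refine laplacian_eq_zero_of_eventuallyEq_const (c := 1) ?_
    filter_upwards [isOpen_ball.mem_nhds hin] with y hy using ballCutoff_eq_one hr₁ hr hy
  · have hout : x ∉ tsupport (ballCutoff p r₁ r₂) := fun h =>
      hx ⟨tsupport_ballCutoff_subset hr₁ hr h, hin⟩
    exact laplacian_eq_zero_of_eventuallyEq_const (notMem_tsupport_iff_eventuallyEq.1 hout)

theorem laplacian_smoothTransition_comp_norm_sub_sq (p : E) (a w : ℝ) (x : E) :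
    Δ (fun y => smoothTransition ((a - ‖y - p‖ ^ 2) / w)) x =
      4 * (‖x - p‖ ^ 2 / w ^ 2) * deriv (deriv smoothTransition) ((a - ‖x - p‖ ^ 2) / w) -
        2 * Module.finrank ℝ E * (1 / w) * deriv smoothTransition ((a - ‖x - p‖ ^ 2) / w) := by
  let g : ℝ → ℝ := fun q => smoothTransition ((a - q) / w)
  have hη : ContDiff ℝ 2 smoothTransition := smoothTransition.contDiff
  have hlin (q : ℝ) : HasDerivAt (fun q => (a - q) / w) (-1 / w) q :=
    ((hasDerivAt_id q).const_sub _).div_const w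
  have hfirst : deriv g = fun q => deriv smoothTransition ((a - q) / w) * (-1 / w) :=
    funext fun q => ((hη.differentiable (by simp) _).hasDerivAt.comp q (hlin q)).deriv
  have hsecond (q : ℝ) : deriv (deriv g) q =
      deriv (deriv smoothTransition) ((a - q) / w) * (-1 / w) * (-1 / w) := by
    rw [hfirst]
    exact ((((hη.iterate_deriv' 1 1).differentiable (by simp) _).hasDerivAt.comp q
      (hlin q)).mul_const _).deriv
  have hg : ContDiff ℝ 2 g := hη.comp ((contDiff_const.sub contDiff_id).div_const _)
  have hradial := laplacian_comp_norm_sub_sq hg p x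
  rw [hsecond, hfirst] at hradial
  exact hradial.trans (by ring)

variable (E) in
theorem exists_forall_abs_laplacian_ballCutoff_le : ∃ C > 0, ∀ (p : E) {r₁ r₂ : ℝ}, 0 ≤ r₁ →
    r₁ < r₂ → ∀ x, |Δ (ballCutoff p r₁ r₂) x| ≤ C / (r₂ - r₁) ^ 2 := by
  obtain ⟨M, hM, hbound⟩ := exists_forall_abs_deriv_smoothTransition_le
  refine ⟨4 * M + 2 * Module.finrank ℝ E * M, by positivity, fun p r₁ r₂ hr₁ hr x => ?_⟩
  by_cases hx : x ∈ closedBall p r₂ \ ball p r₁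
  swap
  · rw [laplacian_ballCutoff_eq_zero hr₁ hr hx, abs_zero]
    positivity
  have hxr : ‖x - p‖ ≤ r₂ := mem_closedBall_iff_norm.1 hx.1
  have hr₂ : 0 < r₂ := hr₁.trans_lt hr
  have hgap : 0 < r₂ - r₁ := sub_pos.2 hr
  let w := r₂ ^ 2 - r₁ ^ 2
  have hw : (r₂ - r₁) * r₂ ≤ w := by simp only [w]; nlinarith
  have hw_pos : 0 < w := (mul_pos hgap hr₂).trans_le hw
  have hinv : 1 / w ≤ 1 / (r₂ - r₁) ^ 2 :=
    one_div_le_one_div_of_le (by positivity) (by simp only [w]; nlinarith)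
  have hratio : ‖x - p‖ ^ 2 / w ^ 2 ≤ 1 / (r₂ - r₁) ^ 2 :=
    calc ‖x - p‖ ^ 2 / w ^ 2 ≤ r₂ ^ 2 / ((r₂ - r₁) * r₂) ^ 2 := by gcongr
      _ = 1 / (r₂ - r₁) ^ 2 := by field
  obtain ⟨hfirst, hsecond⟩ := hbound ((r₂ ^ 2 - ‖x - p‖ ^ 2) / w)
  calc |Δ (ballCutoff p r₁ r₂) x|
      ≤ 4 * (‖x - p‖ ^ 2 / w ^ 2) * |deriv (deriv smoothTransition) ((r₂ ^ 2 - ‖x - p‖ ^ 2) / w)| +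
        2 * Module.finrank ℝ E * (1 / w) *
          |deriv smoothTransition ((r₂ ^ 2 - ‖x - p‖ ^ 2) / w)| := by
        refine (congrArg abs (laplacian_smoothTransition_comp_norm_sub_sq p _ w x)).trans_le
          ((abs_sub _ _).trans_eq (congrArg₂ (· + ·) ?_ ?_)) <;>
        rw [abs_mul, abs_of_nonneg (by positivity)]
    _ ≤ 4 * (1 / (r₂ - r₁) ^ 2) * M + 2 * Module.finrank ℝ E * (1 / (r₂ - r₁) ^ 2) * M := by gcongr
    _ = (4 * M + 2 * Module.finrank ℝ E * M) / (r₂ - r₁) ^ 2 := by ring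

end Cutoff

namespace IsDirichletDiffusion

section Flux

variable {E : Type*} [NormedAddCommGroup E] [InnerProductSpace ℝ E] [FiniteDimensional ℝ E]
  [MeasurableSpace E] [BorelSpace E] {m : ℝ} {x₀ : E} {ρ T t : ℝ} {u : ℝ → E → ℝ} {φ : E → ℝ}

theorem integrableOn_slice (hu : IsDirichletDiffusion m x₀ ρ T u) (ht : t ∈ Icc 0 T) :
    IntegrableOn (u t) (ball x₀ ρ) := by
  have : ContinuousOn (u t) (closedBall x₀ ρ) :=
    hu.continuousOn.comp (f := fun x => (t, x)) (by fun_prop) fun x hx => ⟨ht, hx⟩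
  exact (this.integrableOn_compact (isCompact_closedBall _ _)).mono_set ball_subset_closedBall

theorem hasDerivAt_setIntegral_mul (hu : IsDirichletDiffusion m x₀ ρ T u) (hφ : ContDiff ℝ 2 φ)
    (hφc : HasCompactSupport φ) (hφρ : tsupport φ ⊆ ball x₀ ρ) (ht : t ∈ Ioo 0 T) :
    HasDerivAt (fun s => ∫ x in ball x₀ ρ, φ x * u s x) (∫ x, Δ φ x * u t x ^ m) t := by
  have hderiv : HasDerivAt (fun s => ∫ x in tsupport φ, φ x * u s x)
      (∫ x in tsupport φ, φ x * Δ (fun y => u t y ^ m) x) t := by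
    refine hasDerivAt_setIntegral hφc (isClosed_tsupport φ).measurableSet subset_rfl
      (Ioo_mem_nhds ht.1 ht.2) (f' := fun s x => φ x * Δ (fun y => u s y ^ m) x)
      (fun s hs => hφ.continuous.continuousOn.mul ?_) ?_
      fun s hs x hx => (hu.hasDerivAt s hs x (hφρ hx)).const_mul _
    · exact hu.contDiffOn.continuousOn.comp (f := fun x => (s, x)) (by fun_prop)
        fun x hx => ⟨hs, hφρ hx⟩
    · exact (hφ.continuous.comp continuous_snd).continuousOn.mul <|
        (continuousOn_laplacian_slice (isOpen_Ioo.prod isOpen_ball) hu.contDiffOn_rpow).mono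
          (prod_mono_right hφρ)
  have hzero {x : E} (hx : x ∉ tsupport φ) (r : ℝ) : φ x * r = 0 := by
    rw [image_eq_zero_of_notMem_tsupport hx, zero_mul]
  rw [setIntegral_eq_integral_of_forall_compl_eq_zero fun x hx => hzero hx _,
    integral_mul_laplacian_of_tsupport_subset isOpen_ball hφ hφc hφρ
      (hu.contDiffOn_rpow_slice ht)] at hderiv
  refine hderiv.congr_of_eventuallyEq (.of_forall fun s => ?_)
  exact setIntegral_eq_of_subset_of_forall_sdiff_eq_zero measurableSet_ball hφρ
    fun x hx => hzero hx.2 _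

theorem neg_integral_laplacian_mul_rpow_le (hu : IsDirichletDiffusion m x₀ ρ T u) (hm : 0 ≤ m)
    {A : Set E} (hA : MeasurableSet A) (hAρ : A ⊆ ball x₀ ρ) {K : ℝ}
    (hφA : ∀ x ∉ A, Δ φ x = 0) (hφK : ∀ x ∈ A, |Δ φ x| ≤ K) (ht : t ∈ Icc 0 T) :
    -∫ x, Δ φ x * u t x ^ m ≤ K * ∫ x in A, u t x ^ m := by
  have hA' : A ⊆ closedBall x₀ ρ := hAρ.trans ball_subset_closedBall
  have hcont : ContinuousOn (fun x => u t x ^ m) (closedBall x₀ ρ) :=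
    (hu.continuousOn_rpow hm).comp (f := fun x => (t, x)) (by fun_prop) fun x hx => ⟨ht, hx⟩
  have hint : IntegrableOn (fun x => u t x ^ m) A :=
    (hcont.integrableOn_compact (isCompact_closedBall _ _)).mono_set hA'
  rw [← setIntegral_eq_integral_of_forall_compl_eq_zero (s := A) fun x hx => by
    rw [hφA x hx, zero_mul], ← integral_const_mul]
  refine (neg_le_abs _).trans (norm_integral_le_of_norm_le
    (f := fun x => Δ φ x * u t x ^ m) (hint.const_mul K) ?_)
  filter_upwards [ae_restrict_mem hA] with x hx
  have hpow : 0 ≤ u t x ^ m := rpow_nonneg (hu.nonneg t ht x (hA' hx)) m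
  rw [norm_mul, Real.norm_of_nonneg hpow]
  exact mul_le_mul_of_nonneg_right (hφK x hx) hpow

theorem setIntegral_mul_sub_le_flux (hu : IsDirichletDiffusion m x₀ ρ T u) (hm : 0 ≤ m)
    (hφ : ContDiff ℝ 2 φ) (hφc : HasCompactSupport φ) (hφρ : tsupport φ ⊆ ball x₀ ρ)
    {A : Set E} (hA : MeasurableSet A) (hAρ : A ⊆ ball x₀ ρ) {K : ℝ}
    (hφA : ∀ x ∉ A, Δ φ x = 0) (hφK : ∀ x ∈ A, |Δ φ x| ≤ K) {s : ℝ} (hs : s ∈ Icc 0 T) :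
    (∫ x in ball x₀ ρ, φ x * u s x) - ∫ x in ball x₀ ρ, φ x * u T x ≤
      K * ∫ t in Ioc s T, ∫ x in A, u t x ^ m := by
  have hsub : Icc s T ⊆ Icc 0 T := Icc_subset_Icc_left hs.1
  have hball : IsCompact (closedBall x₀ ρ) := isCompact_closedBall _ _
  have hmass : ContinuousOn (fun t => ∫ x in ball x₀ ρ, φ x * u t x) (Icc s T) :=
    (continuousOn_setIntegral isCompact_Icc hball measurableSet_ball ball_subset_closedBall <|
      (hφ.continuous.comp continuous_snd).continuousOn.mul hu.continuousOn).mono hsub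
  have hflux : ContinuousOn (fun t => ∫ x in A, u t x ^ m) (Icc s T) :=
    (continuousOn_setIntegral isCompact_Icc hball hA (hAρ.trans ball_subset_closedBall)
      (hu.continuousOn_rpow hm)).mono hsub
  have hmem {t : ℝ} (ht : t ∈ Ioo s T) : t ∈ Ioo 0 T := ⟨hs.1.trans_lt ht.1, ht.2⟩
  have hftc := intervalIntegral.sub_le_integral_of_hasDeriv_right_of_le hs.2
    (φ := fun t => K * ∫ x in A, u t x ^ m) hmass.neg
    (fun t ht => (hu.hasDerivAt_setIntegral_mul hφ hφc hφρ (hmem ht)).neg.hasDerivWithinAt)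
    (continuousOn_const.mul hflux).integrableOn_Icc fun t ht =>
      hu.neg_integral_laplacian_mul_rpow_le hm hA hAρ hφA hφK (Ioo_subset_Icc_self (hmem ht))
  rw [intervalIntegral.integral_of_le hs.2, integral_const_mul] at hftc
  simp only [Pi.neg_apply] at hftc
  linarith

theorem setIntegral_le_mul_setIntegral_cutoff_mul [Nontrivial E]
    (hu : IsDirichletDiffusion m x₀ ρ T u) (hm : 0 < m) {R r : ℝ} (hR : 0 < R)
    (hinit : ∀ x ∈ ball x₀ ρ \ closedBall x₀ R, u 0 x = 0) (ht : t ∈ Ico 0 T)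
    (hRr : 2 * R ≤ r) (hr : ρ / 2 ≤ r) (hrρ : r ≤ ρ) (hφ : Continuous φ) (hφ0 : ∀ x, 0 ≤ φ x)
    (hφ1 : ∀ x ∈ ball x₀ r, φ x = 1) :
    ∫ x in ball x₀ ρ, u t x ≤
      (1 + 2 ^ Module.finrank ℝ E) * ∫ x in ball x₀ ρ, φ x * u t x := by
  have htT : t ∈ Icc 0 T := Ico_subset_Icc_self ht
  have hsub : ball x₀ r ⊆ ball x₀ ρ := ball_subset_ball hrρ
  have hcont : ContinuousOn (fun x => φ x * u t x) (closedBall x₀ ρ) :=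
    hφ.continuousOn.mul <|
      hu.continuousOn.comp (f := fun x => (t, x)) (by fun_prop) fun x hx => ⟨htT, hx⟩
  have hnonneg {x : E} (hx : x ∈ ball x₀ ρ) : 0 ≤ u t x :=
    hu.nonneg t htT x (ball_subset_closedBall hx)
  calc ∫ x in ball x₀ ρ, u t x
      ≤ (1 + 2 ^ Module.finrank ℝ E) * ∫ x in ball x₀ r, u t x := by
        refine setIntegral_ball_le_of_le_midpoint hr hrρ (hu.integrableOn_slice htT)
          (fun x hx => hnonneg (hsub hx)) fun x hx => hu.le_midpoint hm hR hinit ht hx.1 ?_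
        exact hRr.trans (by simpa [dist_eq_norm] using hx.2)
    _ = (1 + 2 ^ Module.finrank ℝ E) * ∫ x in ball x₀ r, φ x * u t x := by
        congr 1
        exact setIntegral_congr_fun measurableSet_ball fun x hx => by simp [hφ1 x hx]
    _ ≤ (1 + 2 ^ Module.finrank ℝ E) * ∫ x in ball x₀ ρ, φ x * u t x := by
        gcongr ?_ * ?_
        refine setIntegral_mono_set ((hcont.integrableOn_compact
          (isCompact_closedBall _ _)).mono_set ball_subset_closedBall) ?_ hsub.eventuallyLE
        filter_upwards [ae_restrict_mem measurableSet_ball] with x hx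
          using mul_nonneg (hφ0 x) (hnonneg hx)

theorem setIntegral_sub_le_flux [Nontrivial E] (hu : IsDirichletDiffusion m x₀ ρ T u)
    (hm : 0 < m) {R r₁ r₂ K : ℝ} (hR : 0 < R)
    (hinit : ∀ x ∈ ball x₀ ρ \ closedBall x₀ R, u 0 x = 0) (hRr₁ : 2 * R ≤ r₁)
    (hρr₁ : ρ / 2 ≤ r₁) (hr : r₁ < r₂) (hr₂ρ : r₂ < ρ)
    (hK : ∀ x, |Δ (ballCutoff x₀ r₁ r₂) x| ≤ K) (ht : t ∈ Ico 0 T) :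
    (∫ x in ball x₀ ρ, u t x) - (1 + 2 ^ Module.finrank ℝ E) * ∫ x in ball x₀ ρ, u T x ≤
      (1 + 2 ^ Module.finrank ℝ E) *
        (K * ∫ τ in Ioc t T, ∫ x in ball x₀ ρ \ ball x₀ (2 * R), u τ x ^ m) := by
  have htT : t ∈ Icc 0 T := Ico_subset_Icc_self ht
  have hT : T ∈ Icc 0 T := ⟨htT.1.trans htT.2, le_rfl⟩
  have hr₁ : 0 ≤ r₁ := by linarith
  let φ : E → ℝ := ballCutoff x₀ r₁ r₂
  have hφ : ContDiff ℝ 2 φ := contDiff_ballCutoff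
  have hφ_supp : tsupport φ ⊆ closedBall x₀ r₂ := tsupport_ballCutoff_subset hr₁ hr
  have hball : closedBall x₀ r₂ ⊆ ball x₀ ρ := closedBall_subset_ball hr₂ρ
  have hflux := hu.setIntegral_mul_sub_le_flux hm.le hφ
    ((isCompact_closedBall x₀ r₂).of_isClosed_subset (isClosed_tsupport φ) hφ_supp)
    (hφ_supp.trans hball) (A := ball x₀ ρ \ ball x₀ (2 * R))
    (measurableSet_ball.diff measurableSet_ball) sdiff_subset
    (fun x hx => laplacian_ballCutoff_eq_zero hr₁ hr fun h =>
      hx (sdiff_subset_sdiff hball (ball_subset_ball hRr₁) h)) (fun x _ => hK x) htT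
  have hmass : ∫ x in ball x₀ ρ, u t x ≤
      (1 + 2 ^ Module.finrank ℝ E) * ∫ x in ball x₀ ρ, φ x * u t x :=
    hu.setIntegral_le_mul_setIntegral_cutoff_mul hm hR hinit ht hRr₁ hρr₁ (hr.trans hr₂ρ).le
      hφ.continuous ballCutoff_nonneg fun x => ballCutoff_eq_one hr₁ hr
  have hmassT : ∫ x in ball x₀ ρ, φ x * u T x ≤ ∫ x in ball x₀ ρ, u T x := by
    have hnonneg : ∀ᵐ x ∂volume.restrict (ball x₀ ρ), 0 ≤ u T x := by
      filter_upwards [ae_restrict_mem measurableSet_ball] with x hx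
        using hu.nonneg T hT x (ball_subset_closedBall hx)
    refine integral_mono_of_nonneg ?_ (hu.integrableOn_slice hT) ?_
    · filter_upwards [hnonneg] with x hx using mul_nonneg (ballCutoff_nonneg x) hx
    · filter_upwards [hnonneg] with x hx using mul_le_of_le_one_left hx (ballCutoff_le_one x)
  rw [sub_le_iff_le_add, ← mul_add]
  refine hmass.trans ?_
  gcongr
  linarith

end Flux

end IsDirichletDiffusion

theorem flux_lemma_general (E : Type*) [NormedAddCommGroup E] [InnerProductSpace ℝ E]
    [FiniteDimensional ℝ E] [Nontrivial E] [MeasurableSpace E] [BorelSpace E] :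
    ∃ k₀ : ℝ, 0 < k₀ ∧ ∀ (m : ℝ), 0 < m → ∀ (x₀ : E) (R R₀ T : ℝ), 0 < R → 2 * R < R₀ →
      ∀ u : ℝ → E → ℝ, IsDirichletDiffusion m x₀ R₀ T u →
        (∀ x ∈ ball x₀ R₀ \ closedBall x₀ R, u 0 x = 0) →
      ∀ s : ℝ, 0 ≤ s → s ≤ T →
        k₀ * (R₀ - 2 * R) ^ 2 * ((∫ x in ball x₀ R₀, u s x) -
            (1 + 2 ^ Module.finrank ℝ E) * ∫ x in ball x₀ R₀, u T x) ≤
          ∫ t in Ioc s T, ∫ x in ball x₀ R₀ \ ball x₀ (2 * R), u t x ^ m := by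
  obtain ⟨C, hC, hlap⟩ := exists_forall_abs_laplacian_ballCutoff_le E
  refine ⟨((1 + 2 ^ Module.finrank ℝ E) * (16 * C))⁻¹, by positivity,
    fun m hm x₀ R R₀ T hR hRR₀ u hu hinit s hs hsT => ?_⟩
  have hgap : 0 < R₀ - 2 * R := sub_pos.2 hRR₀
  rcases hsT.lt_or_eq with hsT | rfl
  · obtain ⟨r₁, hr₁⟩ : ∃ r₁, r₁ = R + R₀ / 2 := ⟨_, rfl⟩
    have hflux := hu.setIntegral_sub_le_flux hm hR hinit (r₁ := r₁)
      (r₂ := r₁ + (R₀ - 2 * R) / 4) (by linarith) (by linarith) (by linarith) (by linarith)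
      (hlap x₀ (by linarith) (by linarith)) ⟨hs, hsT⟩
    rw [add_sub_cancel_left] at hflux
    refine (mul_le_mul_of_nonneg_left hflux (by positivity)).trans_eq ?_
    field
  · have hmass : 0 ≤ ∫ x in ball x₀ R₀, u s x := setIntegral_nonneg measurableSet_ball
      fun x hx => hu.nonneg s ⟨hs, le_rfl⟩ x (ball_subset_closedBall hx)
    have hpow : (1 : ℝ) ≤ 1 + 2 ^ Module.finrank ℝ E := le_add_of_nonneg_right (by positivity)
    rw [Ioc_self, setIntegral_empty]
    exact mul_nonpos_of_nonneg_of_nonpos (by positivity)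
      (sub_nonpos.2 (le_mul_of_one_le_left hmass hpow))

section FastDiffusion

variable {d : ℕ}

theorem spaceLap_eq_laplacian {f : EuclideanSpace ℝ (Fin d) → ℝ} {x : EuclideanSpace ℝ (Fin d)}
    (hf : ContDiffAt ℝ 2 f x) : spaceLap f x = Δ f x := by
  rw [laplacian_eq_sum_fderiv_fderiv (EuclideanSpace.basisFun (Fin d) ℝ)]
  exact Finset.sum_congr rfl fun i _ => by
    simp only [fderiv_fderiv_apply hf, EuclideanSpace.basisFun_apply]

theorem IsDirichletSol.isDirichletDiffusion {m ρ T : ℝ} {x₀ : EuclideanSpace ℝ (Fin d)}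
    {u : ℝ → EuclideanSpace ℝ (Fin d) → ℝ} {u₀ : EuclideanSpace ℝ (Fin d) → ℝ}
    (hu : IsDirichletSol m x₀ ρ T u u₀) : IsDirichletDiffusion m x₀ ρ T u := by
  obtain ⟨hnonneg, hcont, ⟨hpos, hsmooth, heq⟩, -, hbdry, -, -⟩ := hu
  have hC2 : ContDiffOn ℝ 2 (uncurry u) (Ioo 0 T ×ˢ ball x₀ ρ) :=
    contDiffOn_infty.1 hsmooth 2
  have hat {t : ℝ} (ht : t ∈ Ioo 0 T) {x : EuclideanSpace ℝ (Fin d)} (hx : x ∈ ball x₀ ρ) :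
      ContDiffAt ℝ 2 (uncurry u) (t, x) :=
    hC2.contDiffAt ((isOpen_Ioo.prod isOpen_ball).mem_nhds ⟨ht, hx⟩)
  refine ⟨hnonneg, hcont, fun t ht x hx => hpos (t, x) ⟨ht, hx⟩, hC2, fun t ht x hx => ?_,
    fun t ht => hbdry t (Ioo_subset_Ioc_self ht)⟩
  have hdiff : DifferentiableAt ℝ (fun s => u s x) t :=
    ((hat ht hx).differentiableAt (by simp)).comp t (f := fun s => (s, x)) (by fun_prop)
  have hslice : ContDiffAt ℝ 2 (fun y => u t y ^ m) x :=
    ((hat ht hx).comp x (f := fun y => (t, y)) (by fun_prop)).rpow_const_of_ne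
      (hpos (t, x) ⟨ht, hx⟩).ne'
  rw [← spaceLap_eq_laplacian hslice, ← heq (t, x) ⟨ht, hx⟩]
  exact hdiff.hasDerivAt

end FastDiffusion

/-- **Flux Lemma (Lemma 2.1).** -/
theorem flux_lemma
    (d : ℕ) (hd : 1 ≤ d) :
    ∃ k₀ : ℝ, 0 < k₀ ∧
      ∀ (m : ℝ), 0 < m → m < 1 →
      ∀ (x₀ : EuclideanSpace ℝ (Fin d)) (R R₀ T : ℝ), 0 < R → 2 * R < R₀ → 0 < T →
      ∀ (u : ℝ → EuclideanSpace ℝ (Fin d) → ℝ) (u₀ : EuclideanSpace ℝ (Fin d) → ℝ),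
        (∀ x, 0 ≤ u₀ x) →
        (Function.support u₀ ⊆ closedBall x₀ R) →
        IsDirichletSol m x₀ R₀ T u u₀ →
      ∀ s : ℝ, 0 ≤ s → s ≤ T →
        k₀ * (R₀ - 2 * R) ^ 2 * ∫ x in ball x₀ R₀, u s x ≤
          ∫ t in Ioc s T, ∫ x in ball x₀ R₀ \ ball x₀ (2 * R), u t x ^ m := by
  have : NeZero d := ⟨by omega⟩
  obtain ⟨k₀, hk₀, hflux⟩ := flux_lemma_general (EuclideanSpace ℝ (Fin d))
  refine ⟨k₀, hk₀, fun m hm _ x₀ R R₀ T hR hRR₀ _ u u₀ _ hsupp hu s hs hsT => ?_⟩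
  have hinit : ∀ x ∈ ball x₀ R₀ \ closedBall x₀ R, u 0 x = 0 := fun x hx =>
    (hu.2.2.2.1 x hx.1).trans (notMem_support.1 fun h => hx.2 (hsupp h))
  have hextinct : ∫ x in ball x₀ R₀, u T x = 0 :=
    setIntegral_eq_zero_of_forall_eq_zero fun x hx =>
      hu.2.2.2.2.2.1 x (ball_subset_closedBall hx)
  simpa [hextinct] using
    hflux m hm x₀ R R₀ T hR hRR₀ u hu.isDirichletDiffusion hinit s hs hsT
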